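/- arXiv:2301.03313 — 9 statements merged into one kernel-verified Lean document; each statement's English description precedes it below -/
import Mathlib

section
/- Let T be a labeled transition system on state type S and let ≈ be an equivalence relation on S. Then ≈ is a homogeneous bisimulation on T if and only if the membership relation (relating a state p ∈ S to an equivalence class c iff p ∈ c, i.e. the class of p equals c) is a bisimulation between T and the quotient LTS T/≈. -/
/-- A relation `R` is a simulation from LTS `T₁` to LTS `T₂` (same label type). -/
def IsSimulation {S₁ S₂ L : Type*} (T₁ : S₁ → L → S₁ → Prop) (T₂ : S₂ → L → S₂ → Prop)
    (R : S₁ → S₂ → Prop) : Prop :=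
  ∀ p q ℓ p', R p q → T₁ p ℓ p' → ∃ q', R p' q' ∧ T₂ q ℓ q'

/-- A relation `R` is a bisimulation between LTSs `T₁` and `T₂`. -/
def IsBisimulation {S₁ S₂ L : Type*} (T₁ : S₁ → L → S₁ → Prop) (T₂ : S₂ → L → S₂ → Prop)
    (R : S₁ → S₂ → Prop) : Prop :=
  IsSimulation T₁ T₂ R ∧ IsSimulation T₂ T₁ (fun q p => R p q)


/-- The quotient LTS `T/≈`: states are equivalence classes, with a transition
`c →[ℓ] c'` iff every member of `c` has an `ℓ`-transition to some member of `c'`. -/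
def quotLTS {S L : Type*} (T : S → L → S → Prop) (s : Setoid S) :
    Quotient s → L → Quotient s → Prop :=
  fun c ℓ c' => ∀ p : S, Quotient.mk s p = c → ∃ p' : S, Quotient.mk s p' = c' ∧ T p ℓ p'

/-- An equivalence relation `r` on the states of `T` is a homogeneous bisimulation
on `T` iff the membership relation (relating `p` to the class `c` iff the class of
`p` equals `c`) is a bisimulation between `T` and the quotient LTS `T/r`. -/
theorem equivalence_bisimulation_iff_mem_bisimulation {S L : Type*}
    (T : S → L → S → Prop) (r : S → S → Prop) (hr : Equivalence r) :
    IsBisimulation T T r ↔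
      IsBisimulation T (quotLTS T ⟨r, hr⟩)
        (fun p c => Quotient.mk ⟨r, hr⟩ p = c) := by
  have key : ∀ a b : S, (Quotient.mk (⟨r, hr⟩ : Setoid S) a = Quotient.mk ⟨r, hr⟩ b) ↔ r a b :=
    fun a b => ⟨fun h => Quotient.exact h, fun h => Quotient.sound h⟩
  constructor
  · rintro ⟨h1, _⟩
    refine ⟨?_, ?_⟩
    · rintro p q ℓ p' rfl ht
      refine ⟨_, rfl, ?_⟩
      intro x hx
      obtain ⟨x', hx', hxt⟩ := h1 p x ℓ p' (hr.symm ((key _ _).1 hx)) ht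
      exact ⟨x', (key _ _).2 (hr.symm hx'), hxt⟩
    · intro c p ℓ c' hp ht
      exact ht p hp
  · rintro ⟨h1, _⟩
    have sim : ∀ p q ℓ p', r p q → T p ℓ p' → ∃ q', r p' q' ∧ T q ℓ q' := by
      intro p q ℓ p' hpq ht
      obtain ⟨c, hc, hct⟩ := h1 p _ ℓ p' rfl ht
      obtain ⟨q', hq', hqt⟩ := hct q ((key _ _).2 (hr.symm hpq))
      exact ⟨q', (key _ _).1 (hc.trans hq'.symm), hqt⟩
    refine ⟨sim, ?_⟩
    intro p q ℓ p' hpq ht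
    obtain ⟨q', hq', hqt⟩ := sim p q ℓ p' (hr.symm hpq) ht
    exact ⟨q', hr.symm hq', hqt⟩
end

section
/- Let T₁, T₂ be labeled transition systems with the same label type, with state types S₁ and S₂, and let F : S₁ → S₂ be a surjective function whose graph (relating p to F p) is a bisimulation between T₁ and T₂. Let ker F be the equivalence relation on S₁ relating p and p' iff F p = F p'. Then there exists a bijection F̃ from the set of ker F-equivalence classes to S₂ whose graph is a bisimulation between the quotient LTS T₁/(ker F) and T₂. -/
/-- Bisimulation quotienting: if `F : S₁ → S₂` is surjective and its graph is a
bisimulation between `T₁` and `T₂`, then there is a bijection `F̃` from the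
`ker F`-equivalence classes to `S₂` whose graph is a bisimulation between the
quotient LTS `T₁/(ker F)` and `T₂`. -/
theorem bisimulation_quotient {S₁ S₂ L : Type*}
    (T₁ : S₁ → L → S₁ → Prop) (T₂ : S₂ → L → S₂ → Prop)
    (F : S₁ → S₂) (hF : Function.Surjective F)
    (hbis : IsBisimulation T₁ T₂ (fun p q => F p = q)) :
    ∃ Ft : Quotient (Setoid.ker F) → S₂, Function.Bijective Ft ∧
      IsBisimulation (quotLTS T₁ (Setoid.ker F)) T₂ (fun c q => Ft c = q) := by
  obtain ⟨h1, h2⟩ := hbis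
  refine ⟨Quotient.lift F (fun a b h => h), ⟨?_, ?_⟩, ?_, ?_⟩
  · intro a b
    induction a using Quotient.inductionOn
    induction b using Quotient.inductionOn
    intro h
    exact Quotient.sound h
  · intro y
    obtain ⟨x, hx⟩ := hF y
    exact ⟨Quotient.mk _ x, hx⟩
  · intro c q ℓ c' hc hT
    induction c using Quotient.inductionOn with
    | h p =>
      obtain ⟨p', hp', ht⟩ := hT p rfl
      obtain ⟨q', hq', ht'⟩ := h1 p q ℓ p' hc ht
      subst hp'
      exact ⟨q', hq', ht'⟩
  · intro q c ℓ q' hc hT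
    obtain ⟨x, hx⟩ := hF q'
    refine ⟨Quotient.mk _ x, hx, ?_⟩
    intro p hp
    subst hp
    obtain ⟨p', hp', ht⟩ := h2 q p ℓ q' hc hT
    exact ⟨p', Quotient.sound (hp'.trans hx.symm), ht⟩
end

section
/- Let T be a labeled transition system on state type S and let ≈ be an equivalence relation on S which is a homogeneous bisimulation on T. Then the transitive closure of the quotient LTS equals the quotient of the transitive closure: (T/≈)* = T*/≈, i.e. for all equivalence classes c, c' and all finite lists of labels w, c →[w] c' holds in (T/≈)* if and only if it holds in T*/≈. -/
/-- The transitive closure `T*` of an LTS `T`: labels are finite lists of labels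
of `T`, and `p →[[ℓ₁,…,ℓₙ]] p'` iff there is a chain of `T`-transitions from `p`
to `p'` with these labels. -/
inductive LTSStar {S L : Type*} (T : S → L → S → Prop) : S → List L → S → Prop
  | nil (p : S) : LTSStar T p [] p
  | cons {p p' p'' : S} {ℓ : L} {w : List L} :
      T p ℓ p' → LTSStar T p' w p'' → LTSStar T p (ℓ :: w) p''

/-- If the equivalence relation `r` is a homogeneous bisimulation on `T`, then the
transitive closure of the quotient LTS equals the quotient of the transitive
closure: `(T/r)* = T*/r`. -/
theorem star_quotient_eq_quotient_star {S L : Type*}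
    (T : S → L → S → Prop) (r : S → S → Prop) (hr : Equivalence r)
    (hbis : IsBisimulation T T r) :
    ∀ (c c' : Quotient (⟨r, hr⟩ : Setoid S)) (w : List L),
      LTSStar (quotLTS T ⟨r, hr⟩) c w c' ↔ quotLTS (LTSStar T) ⟨r, hr⟩ c w c' := by
  intro c c' w
  constructor
  · intro h
    induction h with
    | nil c => exact fun p hp => ⟨p, hp, LTSStar.nil p⟩
    | cons h1 _ ih =>
      intro p hp
      obtain ⟨p1, hp1, ht⟩ := h1 p hp
      obtain ⟨p2, hp2, hs⟩ := ih p1 hp1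
      exact ⟨p2, hp2, LTSStar.cons ht hs⟩
  · intro h
    obtain ⟨p, rfl⟩ := Quotient.exists_rep c
    obtain ⟨p', rfl, hs⟩ := h p rfl
    clear h
    induction hs with
    | nil p => exact LTSStar.nil _
    | @cons a b d l w ht _ ih =>
      refine LTSStar.cons (p' := Quotient.mk _ b) ?_ ih
      intro q hq
      have hqa : r q a := Quotient.exact hq
      obtain ⟨q', hq', htq⟩ := hbis.1 a q l b (hr.symm hqa) ht
      exact ⟨q', Quotient.sound (hr.symm hq'), htq⟩
end

section
/- Let (𝒳, ∘, ε, Z) be a solution space and let X be a finite nonempty subset of 𝒳. Then the set of valid states X̄ = {x ∈ 𝒳 : ∃ y ∈ 𝒳, x ∘ y ∈ X} is finite. -/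
/-- A solution space over a monoid `M` (with operation `*` and neutral element
`1`): a step set `Z ⊆ M` not containing `1`, such that every element of `M` has
a finite, nonzero number of decompositions as a product of a list of steps. -/
structure SolutionSpace (M : Type*) [Monoid M] where
  /-- The set of steps. -/
  Z : Set M
  one_not_mem : (1 : M) ∉ Z
  decomp_finite : ∀ x : M, {l : List M | (∀ z ∈ l, z ∈ Z) ∧ l.prod = x}.Finite
  decomp_nonempty : ∀ x : M, {l : List M | (∀ z ∈ l, z ∈ Z) ∧ l.prod = x}.Nonempty

/-- The set of valid states `X̄` of an instance with feasible set `X`: the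
partial solutions that can be expanded into a feasible solution. -/
def validStates {M : Type*} [Monoid M] (X : Set M) : Set M :=
  {x : M | ∃ y : M, x * y ∈ X}

/-- For a solution space and a finite nonempty feasible set `X`, the set of
valid states `X̄` is finite. -/
theorem validStates_finite {M : Type*} [Monoid M] (S : SolutionSpace M)
    (X : Set M) (hfin : X.Finite) (hne : X.Nonempty) :
    (validStates X).Finite := by
  refine Set.Finite.subset (hfin.biUnion fun x _ =>
    (S.decomp_finite x).biUnion fun l _ =>
      ((List.finite_toSet l.inits).image List.prod)) ?_
  rintro x ⟨y, hxy⟩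
  obtain ⟨a, ha, hax⟩ := S.decomp_nonempty x
  obtain ⟨b, hb, hby⟩ := S.decomp_nonempty y
  simp only [Set.mem_iUnion]
  refine ⟨x * y, hxy, a ++ b, ⟨?_, ?_⟩, a, ?_, hax⟩
  · intro z hz
    rcases List.mem_append.1 hz with h | h
    · exact ha z h
    · exact hb z h
  · rw [List.prod_append, hax, hby]
  · exact (List.mem_inits _ _).2 (List.prefix_append a b)
end

section
/- Let (𝒳, ∘, ε, Z) be a solution space, X a finite nonempty subset of 𝒳, and X̄ = {x ∈ 𝒳 : ∃ y ∈ 𝒳, x ∘ y ∈ X}. Then for every x ∈ X̄, the set of allowed step actions {z ∈ Z : x ∘ z ∈ X̄} is finite (even when Z is infinite). -/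
/-- From any valid state `x`, the set of allowed step actions
`{z ∈ Z : x * z ∈ X̄}` is finite, even when `Z` is infinite. -/
theorem allowed_steps_finite {M : Type*} [Monoid M] (S : SolutionSpace M)
    (X : Set M) (hfin : X.Finite) (hne : X.Nonempty) :
    ∀ x ∈ validStates X, {z : M | z ∈ S.Z ∧ x * z ∈ validStates X}.Finite := by
  intro x _
  have hU : (⋃ w ∈ X, ⋃ l ∈ {l : List M | (∀ z ∈ l, z ∈ S.Z) ∧ l.prod = w},
      {z : M | z ∈ l}).Finite :=
    hfin.biUnion fun w _ => (S.decomp_finite w).biUnion fun l _ => l.finite_toSet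
  refine hU.subset ?_
  rintro z ⟨hz, y, hy⟩
  obtain ⟨a, ha, hax⟩ := S.decomp_nonempty x
  obtain ⟨b, hb, hby⟩ := S.decomp_nonempty y
  simp only [Set.mem_iUnion]
  refine ⟨x * z * y, hy, a ++ z :: b, ⟨?_, ?_⟩, ?_⟩
  · intro t ht
    rcases List.mem_append.1 ht with h | h
    · exact ha t h
    · rcases List.mem_cons.1 h with h | h
      · exact h ▸ hz
      · exact hb t h
  · rw [List.prod_append, List.prod_cons, hax, hby, mul_assoc]
  · simp
end

section
/- Let (𝒳, ∘, ε, Z) be a solution space, X a finite nonempty subset of 𝒳, and X̄ = {x ∈ 𝒳 : ∃ y ∈ 𝒳, x ∘ y ∈ X}. Then any trajectory contains only finitely many step actions: for every x₀ ∈ X̄ and every sequence z : ℕ → 𝒳 with z n ∈ Z for all n, there exists some n such that the partial product x₀ ∘ z 0 ∘ z 1 ∘ ⋯ ∘ z n does not belong to X̄. -/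
/-- Any trajectory contains only finitely many step actions: for any valid state
`x₀` and any infinite sequence of steps `z`, some partial product
`x₀ * z 0 * ⋯ * z n` leaves the set of valid states. -/
theorem finitely_many_steps {M : Type*} [Monoid M] (S : SolutionSpace M)
    (X : Set M) (hfin : X.Finite) (hne : X.Nonempty) :
    ∀ x₀ ∈ validStates X, ∀ z : ℕ → M, (∀ n, z n ∈ S.Z) →
      ∃ n : ℕ, x₀ * ((List.range (n + 1)).map z).prod ∉ validStates X := by
  intro x₀ _ z hz
  by_contra! hcon
  have hF := hfin.biUnion (fun x _ => S.decomp_finite x)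
  obtain ⟨B, hB⟩ := (hF.image List.length).bddAbove
  obtain ⟨y, hy⟩ := hcon B
  obtain ⟨l₀, h₀, h₀p⟩ := S.decomp_nonempty x₀
  obtain ⟨l₁, h₁, h₁p⟩ := S.decomp_nonempty y
  have hmem : (l₀ ++ (List.range (B + 1)).map z ++ l₁).length ≤ B := by
    apply hB
    refine ⟨_, ?_, rfl⟩
    simp only [Set.mem_iUnion]
    refine ⟨_, hy, ?_, ?_⟩
    · intro w hw
      rcases List.mem_append.1 hw with hw | hw
      · rcases List.mem_append.1 hw with hw | hw
        · exact h₀ w hw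
        · obtain ⟨k, _, rfl⟩ := List.mem_map.1 hw
          exact hz k
      · exact h₁ w hw
    · rw [List.prod_append, List.prod_append, h₀p, h₁p]
  simp only [List.length_append, List.length_map, List.length_range] at hmem
  omega
end

section
/- (Soundness of the direct MDP.) Let (𝒳, ∘, ε, Z) be a solution space and (f, X) an instance. Then the set of optimal feasible solutions {x ∈ X : ∀ x' ∈ X, f x ≤ f x'} equals the image under the outcome map of the set of reward-maximizing trajectories, i.e. the set of trajectories from ε whose total reward is greater than or equal to the total reward of every trajectory from ε. -/
/-- A trajectory from `ε` of the direct MDP: a list of steps such that every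
prefix product is a valid state and the full product is feasible. -/
def IsTrajectory {M : Type*} [Monoid M] (S : SolutionSpace M) (X : Set M)
    (l : List M) : Prop :=
  (∀ z ∈ l, z ∈ S.Z) ∧ (∀ k ≤ l.length, (l.take k).prod ∈ validStates X) ∧
    l.prod ∈ X

/-- The total reward of a trajectory `[z₁,…,zₙ]`:
`Σ_{k=1}^n (f(z₁⋯z_{k−1}) − f(z₁⋯z_k))`. -/
def totalReward {M : Type*} [Monoid M] (f : M → ℝ) (l : List M) : ℝ :=
  ∑ k ∈ Finset.range l.length, (f ((l.take k).prod) - f ((l.take (k + 1)).prod))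

theorem totalReward_eq_sub {M : Type*} [Monoid M] (f : M → ℝ) (l : List M) :
    totalReward f l = f 1 - f l.prod := by
  unfold totalReward
  rw [Finset.sum_range_sub' (fun k => f ((l.take k).prod))]
  simp

theorem exists_trajectory {M : Type*} [Monoid M] (S : SolutionSpace M) (X : Set M)
    (x : M) (hx : x ∈ X) : ∃ l : List M, IsTrajectory S X l ∧ l.prod = x := by
  obtain ⟨l, hl, rfl⟩ := S.decomp_nonempty x
  refine ⟨l, ⟨hl, fun k _ => ⟨(l.drop k).prod, ?_⟩, hx⟩, rfl⟩
  rwa [List.prod_take_mul_prod_drop]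

/-- Soundness of the direct MDP: the optimal feasible solutions of an instance
`(f, X)` are exactly the outcomes of the reward-maximizing trajectories from `ε`. -/
theorem soundness_direct_MDP {M : Type*} [Monoid M] (S : SolutionSpace M)
    (f : M → ℝ) (X : Set M) (hfin : X.Finite) (hne : X.Nonempty) :
    {x ∈ X | ∀ x' ∈ X, f x ≤ f x'} =
      List.prod '' {l : List M | IsTrajectory S X l ∧
        ∀ l' : List M, IsTrajectory S X l' → totalReward f l' ≤ totalReward f l} := by
  ext x
  simp only [Set.mem_ofPred_eq, Set.mem_image, totalReward_eq_sub]
  constructor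
  · rintro ⟨hx, hopt⟩
    obtain ⟨l, hl, rfl⟩ := exists_trajectory S X x hx
    exact ⟨l, ⟨hl, fun l' hl' => by linarith [hopt _ hl'.2.2]⟩, rfl⟩
  · rintro ⟨l, ⟨hl, hmax⟩, rfl⟩
    refine ⟨hl.2.2, fun x' hx' => ?_⟩
    obtain ⟨l', hl', rfl⟩ := exists_trajectory S X x' hx'
    linarith [hmax l' hl']
end

section
/- Let (𝒳, ∘, ε, Z) be a solution space and (f, X) an instance with valid states X̄. Consider the direct LTS on X̄ with labels (a, r) ∈ 𝒳 × ℝ and transitions: x →[(z, f(x) − f(x∘z))] x∘z whenever z ∈ Z and x∘z ∈ X̄, and x →[(ε, 0)] x whenever x ∈ X. Consider the reduced LTS on pairs (g, Y) with g : 𝒳 → ℝ and Y ⊆ 𝒳, with transitions: (g, Y) →[(z, g(ε) − g(z))] (g * z, Y * z) whenever z ∈ Z and Y * z ≠ ∅, and (g, Y) →[(ε, 0)] (g, Y) whenever ε ∈ Y. Then the graph of the map Φ : X̄ → (𝒳 → ℝ) × Set 𝒳 defined by Φ(x) = (f * x, X * x) is a bisimulation between the direct LTS and the reduced LTS. -/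
/-- The reduction of an objective function by a partial solution:
`(g * y)(x) = g(y ∘ x)`. -/
def redF {M : Type*} [Monoid M] (g : M → ℝ) (y : M) : M → ℝ :=
  fun x => g (y * x)

/-- The reduction of a feasible set by a partial solution:
`Y * y = {x : y ∘ x ∈ Y}`. -/
def redX {M : Type*} [Monoid M] (Y : Set M) (y : M) : Set M :=
  {x : M | y * x ∈ Y}

/-- The direct LTS of an instance `(f, X)`, on the valid states `X̄`, with labels
`(a, r) ∈ M × ℝ`: step transitions `x →[(z, f x − f (x∘z))] x∘z` for `z ∈ Z` with
`x∘z ∈ X̄`, and neutral transitions `x →[(ε, 0)] x` for `x ∈ X`. -/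
def directLTS {M : Type*} [Monoid M] (S : SolutionSpace M) (f : M → ℝ) (X : Set M) :
    {x : M // x ∈ validStates X} → M × ℝ → {x : M // x ∈ validStates X} → Prop :=
  fun x lab x' =>
    (∃ z ∈ S.Z, (x' : M) = (x : M) * z ∧ lab = (z, f x - f ((x : M) * z))) ∨
    ((x : M) ∈ X ∧ lab = ((1 : M), (0 : ℝ)) ∧ x' = x)

/-- The reduced (BQ) LTS, on instances `(g, Y)`, with labels `(a, r) ∈ M × ℝ`:
step transitions `(g, Y) →[(z, g(ε) − g(z))] (g*z, Y*z)` for `z ∈ Z` with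
`Y*z ≠ ∅`, and neutral transitions `(g, Y) →[(ε, 0)] (g, Y)` for `ε ∈ Y`. -/
def reducedLTS {M : Type*} [Monoid M] (S : SolutionSpace M) :
    (M → ℝ) × Set M → M × ℝ → (M → ℝ) × Set M → Prop :=
  fun gY lab gY' =>
    (∃ z ∈ S.Z, (redX gY.2 z).Nonempty ∧ gY' = (redF gY.1 z, redX gY.2 z) ∧
      lab = (z, gY.1 1 - gY.1 z)) ∨
    ((1 : M) ∈ gY.2 ∧ lab = ((1 : M), (0 : ℝ)) ∧ gY' = gY)

/-- The graph of the map `Φ(x) = (f * x, X * x)` is a bisimulation between the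
direct LTS of the instance `(f, X)` and the reduced LTS. -/
theorem phi_bisimulation {M : Type*} [Monoid M] (S : SolutionSpace M)
    (f : M → ℝ) (X : Set M) (hfin : X.Finite) (hne : X.Nonempty) :
    IsBisimulation (directLTS S f X) (reducedLTS S)
      (fun x gY => (redF f (x : M), redX X (x : M)) = gY) := by
  have hF : ∀ x z : M, redF (redF f x) z = redF f (x * z) := by
    intro x z
    funext y
    simp [redF, mul_assoc]
  have hX : ∀ x z : M, redX (redX X x) z = redX X (x * z) := by
    intro x z
    ext y
    simp [redX, mul_assoc]
  constructor
  · rintro ⟨x, hx⟩ q lab ⟨x', hx'⟩ rfl h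
    refine ⟨_, rfl, ?_⟩
    rcases h with ⟨z, hz, h1, rfl⟩ | ⟨h1, rfl, h2⟩
    · left
      simp only at h1
      subst h1
      refine ⟨z, hz, ?_, ?_, ?_⟩
      · rw [hX]
        exact hx'
      · simp only [hF, hX]
      · simp [redF]
    · right
      refine ⟨?_, rfl, ?_⟩
      · simpa [redX] using h1
      · rw [h2]
  · rintro q ⟨x, hx⟩ lab q' rfl h
    rcases h with ⟨z, hz, h1, rfl, rfl⟩ | ⟨h1, rfl, rfl⟩
    · rw [hX] at h1
      refine ⟨⟨x * z, h1⟩, ?_, Or.inl ⟨z, hz, rfl, ?_⟩⟩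
      · simp only [hF, hX]
      · simp [redF]
    · refine ⟨⟨x, hx⟩, rfl, Or.inr ⟨?_, rfl, rfl⟩⟩
      simpa [redX] using h1
end

section
/- (Soundness of the BQ-MDP.) Let (𝒳, ∘, ε, Z) be a solution space and (f, X) an instance. Call a list l = [z₁,…,zₙ] of elements of Z a BQ-trajectory from (f, X) if, setting (f₀, X₀) = (f, X) and (fₖ, Xₖ) = (f_{k−1} * zₖ, X_{k−1} * zₖ) for 1 ≤ k ≤ n, one has Xₖ ≠ ∅ for all 1 ≤ k ≤ n and ε ∈ Xₙ; its outcome is z₁ ∘ ⋯ ∘ zₙ and its total reward is Σ_{k=1}^n (f_{k−1}(ε) − f_{k−1}(zₖ)). Then the set of optimal feasible solutions {x ∈ X : ∀ x' ∈ X, f x ≤ f x'} equals the image under the outcome map of the set of BQ-trajectories from (f, X) whose total reward is greater than or equal to the total reward of every BQ-trajectory from (f, X). -/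
/-- The iterated reduction of the objective along a list of steps:
`f₀ = f` and `fₖ = f_{k−1} * zₖ`; this computes `fₙ` for the full list. -/
def iterRedF {M : Type*} [Monoid M] (f : M → ℝ) : List M → (M → ℝ)
  | [] => f
  | z :: l => iterRedF (redF f z) l

/-- The iterated reduction of the feasible set along a list of steps:
`X₀ = X` and `Xₖ = X_{k−1} * zₖ`; this computes `Xₙ` for the full list. -/
def iterRedX {M : Type*} [Monoid M] (X : Set M) : List M → Set M
  | [] => X
  | z :: l => iterRedX (redX X z) l

/-- A BQ-trajectory from the instance `(f, X)`: a list `[z₁,…,zₙ]` of steps such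
that `Xₖ ≠ ∅` for all `1 ≤ k ≤ n`, and `ε ∈ Xₙ`. -/
def IsBQTrajectory {M : Type*} [Monoid M] (S : SolutionSpace M) (X : Set M)
    (l : List M) : Prop :=
  (∀ z ∈ l, z ∈ S.Z) ∧
    (∀ k : ℕ, 1 ≤ k → k ≤ l.length → (iterRedX X (l.take k)).Nonempty) ∧
    (1 : M) ∈ iterRedX X l

/-- The total reward of a BQ-trajectory `[z₁,…,zₙ]`:
`Σ_{k=1}^n (f_{k−1}(ε) − f_{k−1}(zₖ))`. -/
def bqTotalReward {M : Type*} [Monoid M] (f : M → ℝ) (l : List M) : ℝ :=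
  ∑ k : Fin l.length,
    (iterRedF f (l.take (k : ℕ)) 1 - iterRedF f (l.take (k : ℕ)) (l.get k))

theorem mem_iterRedX_iff {M : Type*} [Monoid M] (l : List M) (X : Set M) (x : M) :
    x ∈ iterRedX X l ↔ l.prod * x ∈ X := by
  induction l generalizing X with
  | nil => simp [iterRedX]
  | cons z l ih => simp [iterRedX, ih, redX, mul_assoc]

theorem isBQTrajectory_iff {M : Type*} [Monoid M] (S : SolutionSpace M) (X : Set M)
    (l : List M) : IsBQTrajectory S X l ↔ (∀ z ∈ l, z ∈ S.Z) ∧ l.prod ∈ X := by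
  unfold IsBQTrajectory
  simp only [mem_iterRedX_iff, mul_one]
  refine ⟨fun h => ⟨h.1, h.2.2⟩, fun h => ⟨h.1, fun k _ _ => ⟨(l.drop k).prod, ?_⟩, h.2⟩⟩
  rw [mem_iterRedX_iff, List.prod_take_mul_prod_drop]
  exact h.2

theorem bqTotalReward_eq {M : Type*} [Monoid M] (l : List M) (f : M → ℝ) :
    bqTotalReward f l = f 1 - f l.prod := by
  induction l generalizing f with
  | nil => simp [bqTotalReward]
  | cons z l ih =>
    have h : bqTotalReward f (z :: l) = (f 1 - f z) + bqTotalReward (redF f z) l := by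
      unfold bqTotalReward
      exact Fin.sum_univ_succ (n := l.length) _
    rw [h, ih]
    simp [redF]

/-- Soundness of the BQ-MDP: the optimal feasible solutions of an instance
`(f, X)` are exactly the outcomes of the reward-maximizing BQ-trajectories
from `(f, X)`. -/
theorem soundness_BQ_MDP {M : Type*} [Monoid M] (S : SolutionSpace M)
    (f : M → ℝ) (X : Set M) (hfin : X.Finite) (hne : X.Nonempty) :
    {x ∈ X | ∀ x' ∈ X, f x ≤ f x'} =
      List.prod '' {l : List M | IsBQTrajectory S X l ∧
        ∀ l' : List M, IsBQTrajectory S X l' →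
          bqTotalReward f l' ≤ bqTotalReward f l} := by
  ext x
  simp only [isBQTrajectory_iff, bqTotalReward_eq, Set.mem_image, Set.mem_setOf_eq]
  constructor
  · rintro ⟨hx, hopt⟩
    obtain ⟨l, hl, rfl⟩ := S.decomp_nonempty x
    refine ⟨l, ⟨⟨hl, hx⟩, fun l' h' => ?_⟩, rfl⟩
    have := hopt _ h'.2
    linarith
  · rintro ⟨l, ⟨⟨hl, hx⟩, hopt⟩, rfl⟩
    refine ⟨hx, fun x' hx' => ?_⟩
    obtain ⟨l', hl', rfl⟩ := S.decomp_nonempty x'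
    have := hopt l' ⟨hl', hx'⟩
    linarith
end
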